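/- Let X ⊂ ℝⁿ be compact and let a¹, a² be linearly independent vectors in ℝⁿ. Suppose a¹, a² can be completed to a basis {a¹, a², a³, ..., aⁿ} of ℝⁿ with the following property: for every point x⁰ ∈ X and every δ > 0 there exist a number δ₀ ∈ (0, δ] and a point x^σ in the set σ = {x ∈ X : a²·x⁰ − δ₀ ≤ a²·x ≤ a²·x⁰ + δ₀} such that for every x ∈ σ the system a²·x′ = a²·x^σ, a¹·x′ = a¹·x, Σ_{i=3}^{n} |aⁱ·x′ − aⁱ·x| < δ has a solution x′ ∈ σ. Then R_c(X) is proximinal in C(X). -/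

import Mathlib

open Matrix Set Filter Topology

/-- `p 0, p 1, ..., p (m-1)` is a (finite) path whose first difference is
perpendicular to `a1`, with differences alternately perpendicular to `a1` and `a2`,
and all differences nonzero. -/
def IsPathFrom {n : ℕ} (a1 a2 : Fin n → ℝ) (m : ℕ) (p : ℕ → Fin n → ℝ) : Prop :=
  ∀ i, i + 1 < m →
    p (i + 1) - p i ≠ 0 ∧
    (i % 2 = 0 → a1 ⬝ᵥ (p (i + 1) - p i) = 0) ∧
    (i % 2 = 1 → a2 ⬝ᵥ (p (i + 1) - p i) = 0)

/-- A finite path with respect to the directions `a1` and `a2` (the alternation may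
start with either direction). -/
def IsPath {n : ℕ} (a1 a2 : Fin n → ℝ) (m : ℕ) (p : ℕ → Fin n → ℝ) : Prop :=
  IsPathFrom a1 a2 m p ∨ IsPathFrom a2 a1 m p

/-- A finite path of length `m` (i.e. with `m` points) all of whose points lie in `X`. -/
def IsPathIn {n : ℕ} (a1 a2 : Fin n → ℝ) (X : Set (Fin n → ℝ)) (m : ℕ)
    (p : ℕ → Fin n → ℝ) : Prop :=
  1 ≤ m ∧ IsPath a1 a2 m p ∧ ∀ i < m, p i ∈ X

/-- An irreducible path in `X`: no strictly shorter path in `X` joins its endpoints. -/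
def IsIrreduciblePathIn {n : ℕ} (a1 a2 : Fin n → ℝ) (X : Set (Fin n → ℝ)) (m : ℕ)
    (p : ℕ → Fin n → ℝ) : Prop :=
  IsPathIn a1 a2 X m p ∧
  ¬ ∃ l q, l < m ∧ IsPathIn a1 a2 X l q ∧ q 0 = p 0 ∧ q (l - 1) = p (m - 1)

/-- An infinite path whose first difference is perpendicular to `a1`. -/
def IsInfPathFrom {n : ℕ} (a1 a2 : Fin n → ℝ) (p : ℕ → Fin n → ℝ) : Prop :=
  ∀ i,
    p (i + 1) - p i ≠ 0 ∧
    (i % 2 = 0 → a1 ⬝ᵥ (p (i + 1) - p i) = 0) ∧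
    (i % 2 = 1 → a2 ⬝ᵥ (p (i + 1) - p i) = 0)

/-- An infinite path with respect to the directions `a1` and `a2`. -/
def IsInfPath {n : ℕ} (a1 a2 : Fin n → ℝ) (p : ℕ → Fin n → ℝ) : Prop :=
  IsInfPathFrom a1 a2 p ∨ IsInfPathFrom a2 a1 p

/-- `f` is bounded on `X`. -/
def BddOn {n : ℕ} (f : (Fin n → ℝ) → ℝ) (X : Set (Fin n → ℝ)) : Prop :=
  ∃ M, ∀ x ∈ X, |f x| ≤ M

/-- `R_a(X)`: sums of two ridge functions with directions `a1, a2` that are bounded on `X`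
(the individual summands need not be bounded). -/
def RaSet {n : ℕ} (a1 a2 : Fin n → ℝ) (X : Set (Fin n → ℝ)) : Set ((Fin n → ℝ) → ℝ) :=
  {f | (∃ g1 g2 : ℝ → ℝ, ∀ x ∈ X, f x = g1 (a1 ⬝ᵥ x) + g2 (a2 ⬝ᵥ x)) ∧ BddOn f X}

/-- `R_b(X)`: sums of two ridge functions with directions `a1, a2` whose summands are
bounded on `X`. -/
def RbSet {n : ℕ} (a1 a2 : Fin n → ℝ) (X : Set (Fin n → ℝ)) : Set ((Fin n → ℝ) → ℝ) :=
  {f | ∃ g1 g2 : ℝ → ℝ, (∀ x ∈ X, f x = g1 (a1 ⬝ᵥ x) + g2 (a2 ⬝ᵥ x)) ∧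
    BddOn (fun x => g1 (a1 ⬝ᵥ x)) X ∧ BddOn (fun x => g2 (a2 ⬝ᵥ x)) X}

/-- `R_c(X)`: sums of two ridge functions with directions `a1, a2` whose summands are
continuous on `X`. -/
def RcSet {n : ℕ} (a1 a2 : Fin n → ℝ) (X : Set (Fin n → ℝ)) : Set ((Fin n → ℝ) → ℝ) :=
  {f | ∃ g1 g2 : ℝ → ℝ, (∀ x ∈ X, f x = g1 (a1 ⬝ᵥ x) + g2 (a2 ⬝ᵥ x)) ∧
    ContinuousOn (fun x => g1 (a1 ⬝ᵥ x)) X ∧ ContinuousOn (fun x => g2 (a2 ⬝ᵥ x)) X}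

/-- The uniform (sup) distance of `f` and `g` over `X`. -/
noncomputable def supDist {n : ℕ} (X : Set (Fin n → ℝ)) (f g : (Fin n → ℝ) → ℝ) : ℝ :=
  sSup {r | ∃ x ∈ X, r = |f x - g x|}

/-- `f` has an extremal element (best approximation in the sup norm over `X`) in `S`. -/
def HasExtremalIn {n : ℕ} (X : Set (Fin n → ℝ)) (f : (Fin n → ℝ) → ℝ)
    (S : Set ((Fin n → ℝ) → ℝ)) : Prop :=
  ∃ g0 ∈ S, supDist X f g0 = sInf ((supDist X f) '' S)

/-- The orbit of `t`: all points of `X` joined to `t` by a common path lying in `X`. -/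
def Orbit {n : ℕ} (a1 a2 : Fin n → ℝ) (X : Set (Fin n → ℝ)) (t : Fin n → ℝ) :
    Set (Fin n → ℝ) :=
  {y | ∃ m p, IsPathIn a1 a2 X m p ∧ (∃ i < m, p i = t) ∧ (∃ j < m, p j = y)}

/-- The variation of `f` on a set `Y`. -/
noncomputable def varOn {n : ℕ} (f : (Fin n → ℝ) → ℝ) (Y : Set (Fin n → ℝ)) : ℝ :=
  sSup {r | ∃ x ∈ Y, ∃ y ∈ Y, r = |f x - f y|}

/-!
Write `p x = a¹ ⬝ᵥ x` and `q x = a² ⬝ᵥ x`. A function `h` of `q` extends to an approximation of `f`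
by `g₁ ∘ p + h ∘ q` with error `E` as soon as `f - h ∘ q` oscillates by at most `2 * E` on each
fibre of `p`; call such an `h` a potential at level `E`.

Potentials at every level above `E` yield one at level `E`: they can be renormalised on classes of
points of bounded relative difference so as to converge along an ultrafilter. Given a potential at
level `E`, consider its least admissible lower envelope and the upper envelope this one admits. Any
function between the two envelopes is again a potential at level `E`. The cross-section hypothesis
transports neighbouring fibres of `q` into a single fibre almost without changing `f`, which forces
the upper limit of the lower envelope to stay below the lower limit of the upper one, so a
continuous function fits in between. A second insertion, on the side of `p`, produces `g₁`.
-/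

section Insertion

variable {Y : Type*} [TopologicalSpace Y]

lemma exists_continuousMap_dist_le_of_geometric {M : Type*} [MetricSpace M] [CompleteSpace M]
    {C : ℝ} {u : ℕ → C(Y, M)} (hu : ∀ k y, dist (u k y) (u (k + 1) y) ≤ C / 2 / 2 ^ k) :
    ∃ g : C(Y, M), ∀ k y, dist (u k y) (g y) ≤ C / 2 ^ k := by
  choose g hg using fun y ↦
    cauchySeq_tendsto_of_complete (cauchySeq_of_le_geometric_two fun k ↦ hu k y)
  have hdist k y : dist (u k y) (g y) ≤ C / 2 ^ k :=
    dist_le_of_le_geometric_two_of_tendsto (fun k ↦ hu k y) (hg y) k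
  have hunif : TendstoUniformly (fun k ↦ ⇑(u k)) g atTop := by
    have hzero : Tendsto (fun k : ℕ ↦ C / 2 ^ k) atTop (𝓝 0) :=
      tendsto_const_nhds.div_atTop (tendsto_pow_atTop_atTop_of_one_lt one_lt_two)
    refine Metric.tendstoUniformly_iff.2 fun ε hε ↦ ?_
    filter_upwards [hzero.eventually_lt_const hε] with k hk y
    rw [dist_comm]
    exact (hdist k y).trans_lt hk
  exact ⟨⟨g, hunif.continuous (Frequently.of_forall fun k ↦ (u k).continuous)⟩, hdist⟩

/-- The values lying above `L` and below `U` up to an error `r`. -/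
def approxBetween (L U : Set ℝ) (r : ℝ) : Set ℝ :=
  {v | v + r ∈ upperBounds L ∧ v - r ∈ lowerBounds U}

lemma convex_approxBetween (L U : Set ℝ) (r : ℝ) : Convex ℝ (approxBetween L U r) := by
  refine Set.OrdConnected.convex ⟨fun v hv w hw u hu ↦ ⟨fun a ha ↦ ?_, fun b hb ↦ ?_⟩⟩
  · exact (hv.1 ha).trans (by linarith [hu.1])
  · exact le_trans (by linarith [hu.2]) (hw.2 hb)

-- Clamping to `[c - r, c + r]` keeps a value admissible because `w`, which stays within `r / 2`
-- of `c`, is itself admissible with the larger error `r`.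
lemma clamp_mem_approxBetween {L U : Set ℝ} {r c v w : ℝ} (hv : v ∈ approxBetween L U (r / 2))
    (hw : w ∈ approxBetween L U r) (hwc : |w - c| ≤ r / 2) :
    max (c - r) (min v (c + r)) ∈ approxBetween L U (r / 2) := by
  obtain ⟨hwc₁, hwc₂⟩ := abs_le.1 hwc
  refine ⟨fun a ha ↦ ?_, fun b hb ↦ ?_⟩
  · have hmin : a - r / 2 ≤ min v (c + r) :=
      le_min (by linarith [hv.1 ha]) (by linarith [hw.1 ha])
    linarith [hmin.trans (le_max_right (c - r) _)]
  · have hmax : max (c - r) (min v (c + r)) ≤ b + r / 2 :=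
      max_le (by linarith [hw.2 hb]) ((min_le_left _ _).trans (by linarith [hv.2 hb]))
    linarith

variable [NormalSpace Y] [ParacompactSpace Y]

lemma exists_continuousMap_mem_approxBetween_half {L U : Y → Set ℝ} {r : ℝ} (hr : 0 < r)
    (hLU : ∀ s, ∃ v, ∀ᶠ y in 𝓝 s, v ∈ approxBetween (L y) (U y) (r / 2))
    (g : C(Y, ℝ)) (hg : ∀ y, g y ∈ approxBetween (L y) (U y) r) :
    ∃ g' : C(Y, ℝ), (∀ y, g' y ∈ approxBetween (L y) (U y) (r / 2)) ∧
      ∀ y, dist (g y) (g' y) ≤ 2 * r := by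
  obtain ⟨g', hg'⟩ := exists_continuous_forall_mem_convex_of_local_const
    (t := fun y ↦ approxBetween (L y) (U y) (r / 2) ∩ Metric.closedBall (g y) (2 * r))
    (fun y ↦ (convex_approxBetween _ _ _).inter (convex_closedBall _ _)) fun s ↦ by
      obtain ⟨v, hv⟩ := hLU s
      refine ⟨max (g s - r) (min v (g s + r)), ?_⟩
      filter_upwards [hv, g.continuous.continuousAt.eventually_mem
        (Metric.closedBall_mem_nhds (g s) (half_pos hr))] with y hvy hgy
      rw [Metric.mem_closedBall, Real.dist_eq] at hgy
      refine ⟨clamp_mem_approxBetween hvy (hg y) hgy, ?_⟩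
      have hlow := le_max_left (g s - r) (min v (g s + r))
      have hhigh : max (g s - r) (min v (g s + r)) ≤ g s + r :=
        max_le (by linarith) (min_le_right _ _)
      rw [Metric.mem_closedBall, Real.dist_eq, abs_le]
      constructor <;> linarith [abs_le.1 hgy]
  exact ⟨g', fun y ↦ (hg' y).1, fun y ↦ dist_comm (g y) (g' y) ▸ (hg' y).2⟩

-- The hypothesis says that the upper limit of `sSup ∘ L` at `s` is at most the lower limit of
-- `sInf ∘ U`, so this is the Hahn–Katětov–Tong insertion theorem without the two envelopes.
theorem exists_continuousMap_between {L U : Y → Set ℝ}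
    (hLU : ∀ s, ∀ ε > 0, ∃ v, ∀ᶠ y in 𝓝 s, v ∈ approxBetween (L y) (U y) ε) :
    ∃ g : C(Y, ℝ), ∀ y, g y ∈ upperBounds (L y) ∩ lowerBounds (U y) := by
  obtain ⟨g₀, hg₀⟩ := exists_continuous_forall_mem_convex_of_local_const
    (fun y ↦ convex_approxBetween (L y) (U y) 1) fun s ↦ hLU s 1 one_pos
  have hstep (k : ℕ) (g : C(Y, ℝ)) (hg : ∀ y, g y ∈ approxBetween (L y) (U y) (1 / 2 ^ k)) :
      ∃ g' : C(Y, ℝ), (∀ y, g' y ∈ approxBetween (L y) (U y) (1 / 2 ^ (k + 1))) ∧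
        ∀ y, dist (g y) (g' y) ≤ 4 / 2 / 2 ^ k := by
    have hr : (0 : ℝ) < 1 / 2 ^ k := by positivity
    have hhalf : (1 : ℝ) / 2 ^ k / 2 = 1 / 2 ^ (k + 1) := by ring
    obtain ⟨g', hg', hdist⟩ :=
      exists_continuousMap_mem_approxBetween_half hr (fun s ↦ hLU s _ (half_pos hr)) g hg
    exact ⟨g', hhalf ▸ hg', fun y ↦ (hdist y).trans_eq (by ring)⟩
  choose! next hnext_mem hnext_dist using hstep
  let u : ℕ → C(Y, ℝ) := Nat.rec g₀ next
  have hu k : ∀ y, u k y ∈ approxBetween (L y) (U y) (1 / 2 ^ k) := by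
    induction k with
    | zero =>
      rw [pow_zero, div_one]
      exact hg₀
    | succ k ih => exact hnext_mem k _ ih
  obtain ⟨g, hg⟩ := exists_continuousMap_dist_le_of_geometric fun k ↦ hnext_dist k (u k) (hu k)
  have hzero : Tendsto (fun k : ℕ ↦ (5 : ℝ) / 2 ^ k) atTop (𝓝 0) :=
    tendsto_const_nhds.div_atTop (tendsto_pow_atTop_atTop_of_one_lt one_lt_two)
  have hsum (k : ℕ) : (5 : ℝ) / 2 ^ k = 1 / 2 ^ k + 4 / 2 ^ k := by ring
  refine ⟨g, fun y ↦ ⟨fun a ha ↦ ?_, fun b hb ↦ ?_⟩⟩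
  · refine ge_of_tendsto' (by simpa using hzero.const_add (g y)) fun k ↦ ?_
    linarith [(hu k y).1 ha, hsum k, abs_le.1 (hg k y)]
  · refine le_of_tendsto' (by simpa using hzero.const_sub (g y)) fun k ↦ ?_
    linarith [(hu k y).2 hb, hsum k, abs_le.1 (hg k y)]

theorem exists_continuousMap_abs_sub_comp_le {X : Type*} [TopologicalSpace X] {p : X → Y}
    (hp : IsClosedMap p) {F : X → ℝ} (hF : Continuous F) {E : ℝ}
    (hosc : ∀ x x', p x = p x' → F x - F x' ≤ 2 * E) :
    ∃ g : C(Y, ℝ), ∀ x, |F x - g (p x)| ≤ E := by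
  have hfibre s : ∃ v, ∀ x, p x = s → |F x - v| ≤ E := by
    rcases (p ⁻¹' {s}).eq_empty_or_nonempty with hempty | hne
    · exact ⟨0, fun x hx ↦ (hempty.subset hx).elim⟩
    obtain ⟨v, hlow, hhigh⟩ := exists_between_of_forall_le
      (hne.image fun x ↦ F x - E) (hne.image fun x ↦ F x + E) (by
        rintro _ ⟨x, hx, rfl⟩ _ ⟨x', hx', rfl⟩
        linarith [hosc x x' (hx.trans hx'.symm)])
    refine ⟨v, fun x hx ↦ abs_sub_le_iff.2 ⟨?_, ?_⟩⟩
    · linarith [hlow (mem_image_of_mem (fun x ↦ F x - E) hx)]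
    · linarith [hhigh (mem_image_of_mem (fun x ↦ F x + E) hx)]
  obtain ⟨g, hg⟩ := exists_continuousMap_between (Y := Y)
    (L := fun y ↦ (fun x ↦ F x - E) '' (p ⁻¹' {y}))
    (U := fun y ↦ (fun x ↦ F x + E) '' (p ⁻¹' {y})) fun s ε hε ↦ by
      obtain ⟨v, hv⟩ := hfibre s
      have hnear : ∀ᶠ x in 𝓝ˢ (p ⁻¹' {s}), |F x - v| < E + ε :=
        (isOpen_lt (hF.sub continuous_const).abs continuous_const).mem_nhdsSet.2
          fun x hx ↦ (hv x hx).trans_lt (lt_add_of_pos_right E hε)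
      refine ⟨v, (eventually_comap.1 (hp.comap_nhds_le hnear)).mono fun y hy ↦ ⟨?_, ?_⟩⟩ <;>
      · rintro _ ⟨x, hx, rfl⟩
        linarith [abs_lt.1 (hy x hx)]
  refine ⟨g, fun x ↦ abs_sub_le_iff.2 ⟨?_, ?_⟩⟩
  · linarith [(hg (p x)).1 (mem_image_of_mem (fun x ↦ F x - E) rfl)]
  · linarith [(hg (p x)).2 (mem_image_of_mem (fun x ↦ F x + E) rfl)]

end Insertion

section Potential

variable {X Y₁ Y₂ : Type*} {p : X → Y₁} {q : X → Y₂} {f : X → ℝ} {E : ℝ} {h : Y₂ → ℝ}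

/-- `h` is a potential at level `E`: the function `f - h ∘ q` oscillates by at most `2 * E` on each
fibre of `p`, so that `f` is within `E` of a sum of `h ∘ q` and a function of `p`. -/
def IsPotential (p : X → Y₁) (q : X → Y₂) (f : X → ℝ) (E : ℝ) (h : Y₂ → ℝ) : Prop :=
  ∀ x x', p x = p x' → f x - f x' ≤ h (q x) - h (q x') + 2 * E

lemma isPotential_of_abs_sub_le {g : Y₁ → ℝ} (hgh : ∀ x, |f x - (g (p x) + h (q x))| ≤ E) :
    IsPotential p q f E h := fun x x' hx ↦ by
  have hx₁ := hgh x
  rw [hx] at hx₁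
  linarith [abs_le.1 hx₁, abs_le.1 (hgh x')]

lemma exists_forall_tendsto_sub {ι Y G : Type*} [AddCommGroup G] [TopologicalSpace G]
    [IsTopologicalAddGroup G] (l : Filter ι) (h : ι → Y → G) :
    ∃ h' : Y → G, ∀ s t, (∃ c, Tendsto (fun i ↦ h i s - h i t) l (𝓝 c)) →
      Tendsto (fun i ↦ h i s - h i t) l (𝓝 (h' s - h' t)) := by
  let S : Setoid Y :=
    { r s t := ∃ c, Tendsto (fun i ↦ h i s - h i t) l (𝓝 c)
      iseqv :=
        { refl s := ⟨0, by simpa using tendsto_const_nhds⟩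
          symm := fun ⟨c, hc⟩ ↦ ⟨-c, by simpa using hc.neg⟩
          trans := fun ⟨c, hc⟩ ⟨d, hd⟩ ↦ ⟨c + d, by simpa using hc.add hd⟩ } }
  let base (s : Y) : Y := (Quotient.mk S s).out
  choose h' hh' using fun s ↦ S.symm (Quotient.mk_out (s := S) s)
  refine ⟨h', fun s t hst ↦ ?_⟩
  have hbase : base s = base t := congrArg Quotient.out (Quotient.sound (s := S) hst)
  have hlim : Tendsto (fun i ↦ (h i s - h i (base s)) - (h i t - h i (base t))) l
      (𝓝 (h' s - h' t)) := (hh' s).sub (hh' t)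
  simpa [hbase] using hlim

theorem exists_isPotential_of_forall_add (hE : ∀ ε > 0, ∃ h, IsPotential p q f (E + ε) h) :
    ∃ h, IsPotential p q f E h := by
  choose! h hh using hE
  let l : Ultrafilter ℝ := Ultrafilter.of (𝓝[>] 0)
  have hl : (l : Filter ℝ) ≤ 𝓝[>] 0 := Ultrafilter.of_le _
  obtain ⟨h', hh'⟩ := exists_forall_tendsto_sub (l : Filter ℝ) h
  refine ⟨h', fun x x' hx ↦ ?_⟩
  have hbdd : ∀ᶠ ε in (l : Filter ℝ), h ε (q x) - h ε (q x') ∈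
      Icc (f x - f x' - 2 * (E + 1)) (f x - f x' + 2 * (E + 1)) := by
    filter_upwards [hl (Ioc_mem_nhdsGT one_pos)] with ε hε
    constructor <;> linarith [hh ε hε.1 x x' hx, hh ε hε.1 x' x hx.symm, hε.2]
  obtain ⟨c, -, hc⟩ := isCompact_Icc.ultrafilter_le_nhds
    (l.map fun ε ↦ h ε (q x) - h ε (q x')) (le_principal_iff.2 hbdd)
  have hlevel : Tendsto (fun ε ↦ 2 * (E + ε)) l (𝓝 (2 * (E + 0))) :=
    ((tendsto_id.mono_right nhdsWithin_le_nhds).mono_left hl |>.const_add E).const_mul 2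
  rw [add_zero] at hlevel
  exact ge_of_tendsto ((hh' _ _ ⟨c, hc⟩).add hlevel)
    (hl (mem_of_superset self_mem_nhdsWithin fun ε hε ↦ hh ε hε x x' hx))

/-- The bounds from below that the potential `h` imposes at `y` on any potential agreeing with `h`
at the other points. -/
def lowerConstraints (p : X → Y₁) (q : X → Y₂) (f : X → ℝ) (E : ℝ) (h : Y₂ → ℝ) (y : Y₂) :
    Set ℝ :=
  {a | ∃ x x', q x = y ∧ p x = p x' ∧ a = f x - f x' + h (q x') - 2 * E}

/-- The bounds from above imposed at `y` by the least values that `lowerConstraints` allows at the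
other points; `c` ranges over all upper bounds so that no supremum has to be named. -/
def upperConstraints (p : X → Y₁) (q : X → Y₂) (f : X → ℝ) (E : ℝ) (h : Y₂ → ℝ) (y : Y₂) :
    Set ℝ :=
  {b | ∃ x x', q x = y ∧ p x = p x' ∧ ∃ c ∈ upperBounds (lowerConstraints p q f E h (q x')),
    b = c + f x - f x' + 2 * E}

lemma isPotential_of_mem_bounds_constraints {w : Y₂ → ℝ}
    (hw : ∀ y, w y ∈ upperBounds (lowerConstraints p q f E h y) ∩
      lowerBounds (upperConstraints p q f E h y)) :
    IsPotential p q f E w := fun x x' hx ↦ by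
  linarith [(hw (q x')).2 ⟨x', x, rfl, hx.symm, _, (hw (q x)).1, rfl⟩]

/-- Near every value of `q`, all fibres of `q` can be moved, along fibres of `p` and by an
arbitrarily small distance, into one and the same fibre of `q`, a maximal cross-section. -/
def HasMaximalCrossSections [PseudoMetricSpace X] [TopologicalSpace Y₂] (p : X → Y₁)
    (q : X → Y₂) : Prop :=
  ∀ s, ∀ ρ > 0, ∃ t, ∀ᶠ y in 𝓝 s, ∀ x, q x = y → ∃ z, q z = t ∧ p z = p x ∧ dist z x < ρ

variable [PseudoMetricSpace X] [TopologicalSpace Y₂] [NormalSpace Y₂] [ParacompactSpace Y₂]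

theorem IsPotential.exists_continuousMap (hh : IsPotential p q f E h)
    (hpq : HasMaximalCrossSections p q) (hf : UniformContinuous f) :
    ∃ g : C(Y₂, ℝ), IsPotential p q f E g := by
  obtain ⟨g, hg⟩ := exists_continuousMap_between (L := lowerConstraints p q f E h)
    (U := upperConstraints p q f E h) fun s ε hε ↦ by
      obtain ⟨ρ, hρ, hfρ⟩ := Metric.uniformContinuous_iff.1 hf ε hε
      obtain ⟨t, ht⟩ := hpq s ρ hρ
      refine ⟨h t, ht.mono fun y hy ↦ ⟨?_, ?_⟩⟩
      · rintro _ ⟨x, x', hxy, hx, rfl⟩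
        obtain ⟨z, rfl, hzx, hdist⟩ := hy x hxy
        linarith [abs_lt.1 (hfρ hdist), hh z x' (hzx.trans hx)]
      · rintro _ ⟨x, x', hxy, hx, c, hc, rfl⟩
        obtain ⟨z, rfl, hzx, hdist⟩ := hy x hxy
        linarith [abs_lt.1 (hfρ hdist), hc ⟨x', z, rfl, (hzx.trans hx).symm, rfl⟩]
  exact ⟨g, isPotential_of_mem_bounds_constraints hg⟩

theorem exists_continuousMap_abs_sub_add_le [TopologicalSpace Y₁] [NormalSpace Y₁]
    [ParacompactSpace Y₁] (hp : IsClosedMap p) (hq : Continuous q)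
    (hpq : HasMaximalCrossSections p q) (hf : UniformContinuous f)
    (hE : ∀ ε > 0, ∃ (g₁ : Y₁ → ℝ) (g₂ : Y₂ → ℝ), ∀ x, |f x - (g₁ (p x) + g₂ (q x))| ≤ E + ε) :
    ∃ (g₁ : C(Y₁, ℝ)) (g₂ : C(Y₂, ℝ)), ∀ x, |f x - (g₁ (p x) + g₂ (q x))| ≤ E := by
  obtain ⟨h, hh⟩ := exists_isPotential_of_forall_add fun ε hε ↦
    let ⟨_, g₂, hg⟩ := hE ε hε
    ⟨g₂, isPotential_of_abs_sub_le hg⟩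
  obtain ⟨g₂, hg₂⟩ := hh.exists_continuousMap hpq hf
  obtain ⟨g₁, hg₁⟩ := exists_continuousMap_abs_sub_comp_le hp (F := fun x ↦ f x - g₂ (q x))
    (hf.continuous.sub (g₂.continuous.comp hq)) fun x x' hx ↦ by linarith [hg₂ x x' hx]
  exact ⟨g₁, g₂, fun x ↦ by rw [add_comm, ← sub_sub]; exact hg₁ x⟩

end Potential

section Ridge

lemma exists_pos_forall_dist_lt_of_abs_dotProduct_lt {ι : Type*} [Fintype ι]
    {a : ι → ι → ℝ} (ha : LinearIndependent ℝ a) {ρ : ℝ} (hρ : 0 < ρ) :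
    ∃ η > 0, ∀ x x', (∀ i, |a i ⬝ᵥ x' - a i ⬝ᵥ x| < η) → dist x' x < ρ := by
  classical
  have hker : LinearMap.ker (Matrix.of a).mulVecLin = ⊥ :=
    LinearMap.ker_eq_bot.2 <|
      Matrix.mulVec_injective_iff_isUnit.2 (Matrix.linearIndependent_rows_iff_isUnit.1 ha)
  obtain ⟨K, hK, hanti⟩ := LinearMap.exists_antilipschitzWith _ hker
  have hK' : (0 : ℝ) < K := hK
  refine ⟨ρ / K, by positivity, fun x x' hxx' ↦ ?_⟩
  calc dist x' x ≤ K * dist (Matrix.of a *ᵥ x') (Matrix.of a *ᵥ x) := hanti.le_mul_dist x' x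
    _ < K * (ρ / K) := by
      gcongr
      exact (dist_pi_lt_iff (by positivity)).2 hxx'
    _ = ρ := mul_div_cancel₀ ρ hK'.ne'

lemma hasMaximalCrossSections_dotProduct {ι : Type*} [Fintype ι] {a : ι → ι → ℝ}
    (ha : LinearIndependent ℝ a) {i₁ i₂ : ι} {S : Finset ι} (hS : ∀ i ∉ S, i = i₁ ∨ i = i₂)
    {X : Set (ι → ℝ)} (hX : IsCompact X)
    (hsec : ∀ x₀ ∈ X, ∀ δ > 0, ∃ δ₀ > 0, δ₀ ≤ δ ∧ ∃ t, ∀ x ∈ X,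
      |a i₂ ⬝ᵥ x - a i₂ ⬝ᵥ x₀| ≤ δ₀ → ∃ x' ∈ X, |a i₂ ⬝ᵥ x' - a i₂ ⬝ᵥ x₀| ≤ δ₀ ∧
        a i₂ ⬝ᵥ x' = t ∧ a i₁ ⬝ᵥ x' = a i₁ ⬝ᵥ x ∧ ∑ i ∈ S, |a i ⬝ᵥ x' - a i ⬝ᵥ x| < δ) :
    HasMaximalCrossSections (fun x : X ↦ a i₁ ⬝ᵥ x) (fun x : X ↦ a i₂ ⬝ᵥ x) := by
  intro s ρ hρ
  by_cases hs : s ∈ (fun x ↦ a i₂ ⬝ᵥ x) '' X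
  · obtain ⟨x₀, hx₀, rfl⟩ := hs
    obtain ⟨η, hη, hdist⟩ := exists_pos_forall_dist_lt_of_abs_dotProduct_lt ha hρ
    obtain ⟨δ₀, hδ₀, hδ₀η, t, ht⟩ := hsec x₀ hx₀ (η / 3) (by positivity)
    refine ⟨t, mem_of_superset (Metric.closedBall_mem_nhds _ hδ₀) ?_⟩
    rintro _ hy ⟨x, hx⟩ rfl
    obtain ⟨x', hx', hx'₀, hx't, hx'₁, hsum⟩ := ht x hx hy
    refine ⟨⟨x', hx'⟩, hx't, hx'₁, hdist x x' fun i ↦ ?_⟩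
    by_cases hi : i ∈ S
    · exact (Finset.single_le_sum (fun j _ ↦ abs_nonneg (a j ⬝ᵥ x' - a j ⬝ᵥ x)) hi).trans_lt
        (by linarith)
    rcases hS i hi with rfl | rfl
    · simpa [hx'₁] using hη
    · calc |a i ⬝ᵥ x' - a i ⬝ᵥ x|
          ≤ |a i ⬝ᵥ x' - a i ⬝ᵥ x₀| + |a i ⬝ᵥ x₀ - a i ⬝ᵥ x| := abs_sub_le _ _ _
        _ ≤ δ₀ + δ₀ := add_le_add hx'₀ (by rw [abs_sub_comm]; exact hy)
        _ < η := by linarith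
  · have hclosed : IsClosed ((fun x ↦ a i₂ ⬝ᵥ x) '' X) :=
      (hX.image (continuous_const.dotProduct continuous_id)).isClosed
    refine ⟨0, mem_of_superset (hclosed.isOpen_compl.mem_nhds hs) ?_⟩
    rintro _ hy x rfl
    exact (hy ⟨x, x.2, rfl⟩).elim

variable {n : ℕ} {a1 a2 : Fin n → ℝ} {X : Set (Fin n → ℝ)} {f g : (Fin n → ℝ) → ℝ}

lemma supDist_nonneg (X : Set (Fin n → ℝ)) (f g : (Fin n → ℝ) → ℝ) : 0 ≤ supDist X f g :=
  Real.sSup_nonneg fun _ ⟨_, _, hr⟩ ↦ hr ▸ abs_nonneg _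

lemma abs_sub_le_supDist (hX : IsCompact X) (hf : ContinuousOn f X) (hg : ContinuousOn g X)
    {x : Fin n → ℝ} (hx : x ∈ X) : |f x - g x| ≤ supDist X f g := by
  obtain ⟨M, hM⟩ := hX.bddAbove_image (hf.sub hg).abs
  exact le_csSup ⟨M, fun _ ⟨y, hy, hr⟩ ↦ hr ▸ hM ⟨y, hy, rfl⟩⟩ ⟨x, hx, rfl⟩

lemma continuousOn_of_mem_RcSet (hg : g ∈ RcSet a1 a2 X) : ContinuousOn g X :=
  let ⟨_, _, hsum, hg₁, hg₂⟩ := hg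
  (hg₁.add hg₂).congr hsum

lemma RcSet_nonempty (a1 a2 : Fin n → ℝ) (X : Set (Fin n → ℝ)) : (RcSet a1 a2 X).Nonempty :=
  ⟨0, 0, 0, by simp, continuousOn_const, continuousOn_const⟩

lemma hasExtremalIn_of_forall_abs_sub_le_sInf {S : Set ((Fin n → ℝ) → ℝ)} (hgS : g ∈ S)
    (hg : ∀ x ∈ X, |f x - g x| ≤ sInf (supDist X f '' S)) : HasExtremalIn X f S := by
  have hnonneg : ∀ r ∈ supDist X f '' S, 0 ≤ r := forall_mem_image.2 fun u _ ↦ supDist_nonneg X f u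
  refine ⟨g, hgS, le_antisymm ?_ (csInf_le ⟨0, hnonneg⟩ ⟨g, hgS, rfl⟩)⟩
  exact Real.sSup_le (fun _ ⟨x, hx, hr⟩ ↦ hr ▸ hg x hx) (Real.sInf_nonneg hnonneg)

theorem hasExtremalIn_RcSet_of_hasMaximalCrossSections (hX : IsCompact X) (hf : ContinuousOn f X)
    (hsec : HasMaximalCrossSections (fun x : X ↦ a1 ⬝ᵥ x) (fun x : X ↦ a2 ⬝ᵥ x)) :
    HasExtremalIn X f (RcSet a1 a2 X) := by
  have : CompactSpace X := isCompact_iff_compactSpace.1 hX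
  have hdot (b : Fin n → ℝ) : Continuous fun x ↦ b ⬝ᵥ x :=
    continuous_const.dotProduct continuous_id
  have hnear (ε : ℝ) (hε : 0 < ε) : ∃ g₁ g₂ : ℝ → ℝ, ∀ x : X,
      |f x - (g₁ (a1 ⬝ᵥ x) + g₂ (a2 ⬝ᵥ x))| ≤ sInf (supDist X f '' RcSet a1 a2 X) + ε := by
    obtain ⟨_, ⟨g, hgR, rfl⟩, hlt⟩ :=
      exists_lt_of_csInf_lt ((RcSet_nonempty a1 a2 X).image _) (lt_add_of_pos_right _ hε)
    have hgX := continuousOn_of_mem_RcSet hgR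
    obtain ⟨g₁, g₂, hg, -, -⟩ := hgR
    refine ⟨g₁, g₂, fun x ↦ ?_⟩
    rw [← hg x x.2]
    exact (abs_sub_le_supDist hX hf hgX x.2).trans hlt.le
  obtain ⟨g₁, g₂, hg⟩ := exists_continuousMap_abs_sub_add_le
    ((hdot a1).comp continuous_subtype_val).isClosedMap
    ((hdot a2).comp continuous_subtype_val) hsec
    (CompactSpace.uniformContinuous_of_continuous hf.domRestrict) hnear
  have hmem : (fun x ↦ g₁ (a1 ⬝ᵥ x) + g₂ (a2 ⬝ᵥ x)) ∈ RcSet a1 a2 X :=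
    ⟨g₁, g₂, fun _ _ ↦ rfl, (g₁.continuous.comp (hdot a1)).continuousOn,
      (g₂.continuous.comp (hdot a2)).continuousOn⟩
  exact hasExtremalIn_of_forall_abs_sub_le_sInf hmem fun x hx ↦ hg ⟨x, hx⟩

end Ridge

/-- Theorem 2.1: let `X ⊂ ℝⁿ` be compact, and suppose the linearly
independent vectors `a¹ = a 0`, `a² = a 1` are completed to a basis `a 0, …, a (n-1)`
of `ℝⁿ` such that for every `x⁰ ∈ X` and `δ > 0` there are `δ₀ ∈ (0, δ]` and a point
`xσ` in `σ = {x ∈ X : |a²·x − a²·x⁰| ≤ δ₀}` such that for every `x ∈ σ` the system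
`a²·x′ = a²·xσ`, `a¹·x′ = a¹·x`, `∑_{i=3}^{n} |aⁱ·x′ − aⁱ·x| < δ` has a solution
`x′ ∈ σ`. Then `R_c(X)` is proximinal in `C(X)`. -/
theorem proximinality_of_Rc_of_maximal_cross_sections
    {n : ℕ} (hn : 2 ≤ n) (a1 a2 : Fin n → ℝ)
    (X : Set (Fin n → ℝ)) (hX : IsCompact X)
    (a : Fin n → (Fin n → ℝ))
    (ha1 : a ⟨0, by omega⟩ = a1) (ha2 : a ⟨1, by omega⟩ = a2)
    (hindep : LinearIndependent ℝ a)
    (hspan : Submodule.span ℝ (Set.range a) = ⊤)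
    (hprop : ∀ x0 ∈ X, ∀ δ : ℝ, 0 < δ →
      ∃ δ0 : ℝ, 0 < δ0 ∧ δ0 ≤ δ ∧
        ∃ xσ ∈ {x ∈ X | |a2 ⬝ᵥ x - a2 ⬝ᵥ x0| ≤ δ0},
          ∀ x ∈ {x ∈ X | |a2 ⬝ᵥ x - a2 ⬝ᵥ x0| ≤ δ0},
            ∃ x' ∈ {x ∈ X | |a2 ⬝ᵥ x - a2 ⬝ᵥ x0| ≤ δ0},
              a2 ⬝ᵥ x' = a2 ⬝ᵥ xσ ∧ a1 ⬝ᵥ x' = a1 ⬝ᵥ x ∧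
              ∑ i ∈ Finset.univ.filter (fun i : Fin n => 2 ≤ (i : ℕ)),
                |a i ⬝ᵥ x' - a i ⬝ᵥ x| < δ)
    (f : (Fin n → ℝ) → ℝ) (hf : ContinuousOn f X) :
    HasExtremalIn X f (RcSet a1 a2 X) := by
  subst ha1 ha2
  refine hasExtremalIn_RcSet_of_hasMaximalCrossSections hX hf <|
    hasMaximalCrossSections_dotProduct hindep (S := Finset.univ.filter fun i : Fin n ↦ 2 ≤ (i : ℕ))
      (fun i hi ↦ ?_) hX fun x₀ hx₀ δ hδ ↦ ?_
  · simp only [Finset.mem_filter, Finset.mem_univ, true_and] at hi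
    simp only [Fin.ext_iff]
    omega
  · obtain ⟨δ₀, hδ₀, hδ₀δ, xσ, -, hσ⟩ := hprop x₀ hx₀ δ hδ
    refine ⟨δ₀, hδ₀, hδ₀δ, a ⟨1, hn⟩ ⬝ᵥ xσ, fun x hx hxδ₀ ↦ ?_⟩
    obtain ⟨x', ⟨hx', hx'δ₀⟩, hsystem⟩ := hσ x ⟨hx, hxδ₀⟩
    exact ⟨x', hx', hx'δ₀, hsystem⟩
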